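/- For every automorphism φ of F₂ one has ‖φ(a)‖ ≤ ‖φ(a·[a,b])‖ ≤ 5·‖φ(a)‖, where a·[a,b] = a·a·b·a⁻¹·b⁻¹. In particular, a and a·[a,b] are boundedly translation equivalent in F₂. -/

import Mathlib

noncomputable section

/-- The free group of rank two. -/
abbrev F : Type := FreeGroup (Fin 2)

/-- The generator `a`. -/
def ga : F := FreeGroup.of 0

/-- The generator `b`. -/
def gb : F := FreeGroup.of 1

/-- Build an automorphism of `F` from images of the generators together with
an explicit inverse. -/
def mkAut (x y xi yi : F)
    (h1 : FreeGroup.lift ![xi, yi] x = ga)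
    (h2 : FreeGroup.lift ![xi, yi] y = gb)
    (h3 : FreeGroup.lift ![x, y] xi = ga)
    (h4 : FreeGroup.lift ![x, y] yi = gb) : MulAut F :=
  MonoidHom.toMulEquiv (FreeGroup.lift ![x, y]) (FreeGroup.lift ![xi, yi])
    (by
      ext i
      fin_cases i
      · simpa [ga] using h1
      · simpa [gb] using h2)
    (by
      ext i
      fin_cases i
      · simpa [ga] using h3
      · simpa [gb] using h4)

/-- `σ : a ↦ ab, b ↦ b`. -/
def σ : MulAut F :=
  mkAut (ga * gb) gb (ga * gb⁻¹) gb
    (by simp [ga, gb]) (by simp [ga, gb]) (by simp [ga, gb]) (by simp [ga, gb])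

/-- `τ : a ↦ a, b ↦ ba`. -/
def τ : MulAut F :=
  mkAut ga (gb * ga) ga (gb * ga⁻¹)
    (by simp [ga, gb]) (by simp [ga, gb]) (by simp [ga, gb]) (by simp [ga, gb])

/-- `δ₁ : a ↦ b⁻¹ab, b ↦ b`. -/
def δ₁ : MulAut F :=
  mkAut (gb⁻¹ * ga * gb) gb (gb * ga * gb⁻¹) gb
    (by simp [ga, gb, mul_assoc]) (by simp [ga, gb]) (by simp [ga, gb, mul_assoc]) (by simp [ga, gb])

/-- `δ₂ : a ↦ bab⁻¹, b ↦ b`. -/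
def δ₂ : MulAut F :=
  mkAut (gb * ga * gb⁻¹) gb (gb⁻¹ * ga * gb) gb
    (by simp [ga, gb, mul_assoc]) (by simp [ga, gb]) (by simp [ga, gb, mul_assoc]) (by simp [ga, gb])

/-- `δ₃ : a ↦ a, b ↦ a⁻¹ba`. -/
def δ₃ : MulAut F :=
  mkAut ga (ga⁻¹ * gb * ga) ga (ga * gb * ga⁻¹)
    (by simp [ga, gb]) (by simp [ga, gb, mul_assoc]) (by simp [ga, gb]) (by simp [ga, gb, mul_assoc])

/-- `δ₄ : a ↦ a, b ↦ aba⁻¹`. -/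
def δ₄ : MulAut F :=
  mkAut ga (ga * gb * ga⁻¹) ga (ga⁻¹ * gb * ga)
    (by simp [ga, gb]) (by simp [ga, gb, mul_assoc]) (by simp [ga, gb]) (by simp [ga, gb, mul_assoc])

/-- `π : a ↦ b, b ↦ a⁻¹`. -/
def pi' : MulAut F :=
  mkAut gb ga⁻¹ gb⁻¹ ga
    (by simp [ga, gb]) (by simp [ga, gb]) (by simp [ga, gb]) (by simp [ga, gb])

/-- Word length of (the reduced word representing) an element of `F`. -/
def len (w : F) : ℕ := w.toWord.length

/-- Cyclic length: minimal word length among all conjugates. -/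
def cyclen (w : F) : ℕ := sInf {n | ∃ g : F, len (g * w * g⁻¹) = n}

/-- The chain `τ^{m_k}σ^{l_k}⋯τ^{m_1}σ^{l_1}` of type (C1) determined by the list
`[(l_k, m_k), …, (l_1, m_1)]` of pairs of exponents. -/
def chainC1 (c : List (ℕ × ℕ)) : MulAut F :=
  (c.map fun p => τ ^ p.2 * σ ^ p.1).prod

/-- The chain `τ^{-m_k}σ^{-l_k}⋯τ^{-m_1}σ^{-l_1}` of type (C2) determined by the list
`[(l_k, m_k), …, (l_1, m_1)]` of pairs of exponents. -/
def chainC2 (c : List (ℕ × ℕ)) : MulAut F :=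
  (c.map fun p => (τ ^ p.2)⁻¹ * (σ ^ p.1)⁻¹).prod

/-- Number of factors of `σ` in a chain. -/
def sigmaCount (c : List (ℕ × ℕ)) : ℕ := (c.map Prod.fst).sum

/-- Number of factors of `τ` in a chain. -/
def tauCount (c : List (ℕ × ℕ)) : ℕ := (c.map Prod.snd).sum

/-- The length `Σ (l_i + m_i)` of a chain. -/
def chainLen (c : List (ℕ × ℕ)) : ℕ := sigmaCount c + tauCount c

/-- A Whitehead automorphism of type (W1): it permutes `{a, a⁻¹, b, b⁻¹}`. -/
def IsW1 (β : MulAut F) : Prop :=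
  β ga ∈ ({ga, ga⁻¹, gb, gb⁻¹} : Set F) ∧ β gb ∈ ({ga, ga⁻¹, gb, gb⁻¹} : Set F)

/-- A chain of type (C1). -/
def IsC1 (φ : MulAut F) : Prop := ∃ c : List (ℕ × ℕ), c ≠ [] ∧ φ = chainC1 c

/-- A chain of type (C2). -/
def IsC2 (φ : MulAut F) : Prop := ∃ c : List (ℕ × ℕ), c ≠ [] ∧ φ = chainC2 c

/-- A positive element: a product of the generators `a` and `b`. -/
def IsPositive (w : F) : Prop := w ∈ Submonoid.closure ({ga, gb} : Set F)

/-- The four automorphisms `δ₁, δ₂, δ₃, δ₄`. -/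
def δIdx : Fin 4 → MulAut F := ![δ₁, δ₂, δ₃, δ₄]

/-! ### The length function -/

theorem len_mul_le (x y : F) : len (x * y) ≤ len x + len y := FreeGroup.norm_mul_le x y

theorem len_inv (x : F) : len x⁻¹ = len x := FreeGroup.norm_inv_eq

theorem len_eq_zero {x : F} : len x = 0 ↔ x = 1 := FreeGroup.norm_eq_zero

theorem len_of_reduced {L : List (Fin 2 × Bool)} (h : FreeGroup.IsReduced L) :
    len (FreeGroup.mk L) = L.length := by
  unfold len
  rw [FreeGroup.toWord_mk, h.reduce_eq]

theorem isReduced_invRev {L : List (Fin 2 × Bool)} (h : FreeGroup.IsReduced L) :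
    FreeGroup.IsReduced (FreeGroup.invRev L) := by
  rw [FreeGroup.isReduced_iff_reduce_eq, FreeGroup.reduce_invRev, h.reduce_eq]

/-- Splitting off the longest common prefix of two reduced words. -/
theorem exists_common_prefix_list (L M : List (Fin 2 × Bool)) (hL : FreeGroup.IsReduced L)
    (hM : FreeGroup.IsReduced M) : ∃ P A B, L = P ++ A ∧ M = P ++ B ∧
      FreeGroup.IsReduced (FreeGroup.invRev A ++ B) := by
  induction L generalizing M with
  | nil => exact ⟨[], [], M, by simp, by simp, by simpa using hM⟩
  | cons l L ih =>
    cases M with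
    | nil => exact ⟨[], l :: L, [], by simp, by simp, by simpa using isReduced_invRev hL⟩
    | cons m M =>
      by_cases hlm : l = m
      · subst hlm
        obtain ⟨P, A, B, h1, h2, h3⟩ := ih M (List.IsChain.tail hL) (List.IsChain.tail hM)
        exact ⟨l :: P, A, B, by simp [h1], by simp [h2], h3⟩
      · refine ⟨[], l :: L, m :: M, by simp, by simp, ?_⟩
        unfold FreeGroup.IsReduced
        rw [List.isChain_append]
        refine ⟨isReduced_invRev hL, hM, ?_⟩
        rw [FreeGroup.invRev_cons]
        rcases l with ⟨l1, l2⟩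
        rcases m with ⟨m1, m2⟩
        simp only [FreeGroup.invRev]
        simp
        rintro rfl
        simp at hlm
        revert hlm
        cases l2 <;> cases m2 <;> simp

/-- Splitting off the longest common prefix of two elements. -/
theorem exists_common_prefix (g h : F) : ∃ p α β : F, g = p * α ∧ h = p * β ∧
    len g = len p + len α ∧ len h = len p + len β ∧ len (g⁻¹ * h) = len α + len β := by
  obtain ⟨P, A, B, h1, h2, h3⟩ := exists_common_prefix_list g.toWord h.toWord
    FreeGroup.isReduced_toWord FreeGroup.isReduced_toWord
  have hg : FreeGroup.IsReduced (P ++ A) := h1 ▸ FreeGroup.isReduced_toWord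
  have hh : FreeGroup.IsReduced (P ++ B) := h2 ▸ FreeGroup.isReduced_toWord
  have eg : g = FreeGroup.mk P * FreeGroup.mk A := by
    rw [FreeGroup.mul_mk, ← h1, FreeGroup.mk_toWord]
  have eh : h = FreeGroup.mk P * FreeGroup.mk B := by
    rw [FreeGroup.mul_mk, ← h2, FreeGroup.mk_toWord]
  have hP : FreeGroup.IsReduced P := (List.isChain_append.1 hg).1
  have hA : FreeGroup.IsReduced A := (List.isChain_append.1 hg).2.1
  have hB : FreeGroup.IsReduced B := (List.isChain_append.1 hh).2.1
  refine ⟨FreeGroup.mk P, FreeGroup.mk A, FreeGroup.mk B, eg, eh, ?_, ?_, ?_⟩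
  · rw [len_of_reduced hP, len_of_reduced hA, ← List.length_append, ← h1]; rfl
  · rw [len_of_reduced hP, len_of_reduced hB, ← List.length_append, ← h2]; rfl
  · have : g⁻¹ * h = FreeGroup.mk (FreeGroup.invRev A ++ B) := by
      rw [eg, eh, ← FreeGroup.mul_mk, ← FreeGroup.inv_mk]; group
    rw [this, len_of_reduced h3, len_of_reduced hA, len_of_reduced hB]
    simp

theorem toWord_mul_of_len (p α : F) (h : len (p * α) = len p + len α) :
    (p * α).toWord = p.toWord ++ α.toWord := by
  have := FreeGroup.toWord_mul_sublist p α
  apply this.eq_of_length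
  rw [List.length_append]; exact h

/-- Two prefixes of the same element are comparable. -/
theorem prefix_comparable {p α q β : F} (h : p * α = q * β)
    (h1 : len (p * α) = len p + len α) (h2 : len (q * β) = len q + len β)
    (hpq : len p ≤ len q) : ∃ r, q = p * r ∧ len q = len p + len r ∧ α = r * β := by
  have w1 := toWord_mul_of_len p α h1
  have w2 := toWord_mul_of_len q β h2
  rw [h, w2] at w1
  have hpre : p.toWord <+: q.toWord := by
    apply List.prefix_of_prefix_length_le (l₃ := q.toWord ++ β.toWord)
    · rw [w1]; exact List.prefix_append _ _
    · exact List.prefix_append _ _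
    · exact hpq
  obtain ⟨R, hR⟩ := hpre
  have hqr : FreeGroup.IsReduced (p.toWord ++ R) := hR ▸ FreeGroup.isReduced_toWord
  have hRr : FreeGroup.IsReduced R := (List.isChain_append.1 hqr).2.1
  have hq : q = p * FreeGroup.mk R := by
    conv_lhs => rw [← FreeGroup.mk_toWord (x := q), ← hR, ← FreeGroup.mul_mk,
      FreeGroup.mk_toWord]
  refine ⟨FreeGroup.mk R, hq, ?_, ?_⟩
  · rw [len_of_reduced hRr]
    unfold len
    rw [← hR, List.length_append]
  · rw [hq, mul_assoc] at h
    exact mul_left_cancel h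

theorem prefix_unique {p α q β : F} (h : p * α = q * β)
    (h1 : len (p * α) = len p + len α) (h2 : len (q * β) = len q + len β)
    (hpq : len p = len q) : p = q ∧ α = β := by
  obtain ⟨r, hr, hl, ha⟩ := prefix_comparable h h1 h2 hpq.le
  have : r = 1 := len_eq_zero.1 (by omega)
  subst this
  simp at hr ha
  exact ⟨hr.symm, ha⟩

/-- Twice the length of the common prefix. -/
def C2 (g h : F) : ℤ := len g + len h - len (g⁻¹ * h)

theorem C2_comm (g h : F) : C2 g h = C2 h g := by
  unfold C2
  have : len (g⁻¹ * h) = len (h⁻¹ * g) := by rw [← len_inv]; simp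
  rw [this]; ring

theorem le_C2 {p α β : F} (h1 : len (p * α) = len p + len α)
    (h2 : len (p * β) = len p + len β) : (2 * len p : ℤ) ≤ C2 (p * α) (p * β) := by
  unfold C2
  have : (p * α)⁻¹ * (p * β) = α⁻¹ * β := by group
  rw [this]
  have := len_mul_le α⁻¹ β
  rw [len_inv] at this
  omega

theorem exists_prefix_C2 (g h : F) : ∃ p α β : F, g = p * α ∧ h = p * β ∧
    len g = len p + len α ∧ len h = len p + len β ∧ C2 g h = 2 * len p := by
  obtain ⟨p, α, β, h1, h2, h3, h4, h5⟩ := exists_common_prefix g h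
  refine ⟨p, α, β, h1, h2, h3, h4, ?_⟩
  unfold C2
  omega

theorem C2_ultra (g k h : F) : min (C2 g k) (C2 k h) ≤ C2 g h := by
  obtain ⟨p, α, β, h1, h2, h3, h4, h5⟩ := exists_prefix_C2 g k
  obtain ⟨q, γ, δ, k1, k2, k3, k4, k5⟩ := exists_prefix_C2 k h
  rcases le_total (len p) (len q) with hpq | hpq
  · obtain ⟨r, hr, hl, ha⟩ := prefix_comparable (h2.symm.trans k1) (h2 ▸ h4) (k1 ▸ k3) hpq
    have hh : h = p * (r * δ) := by rw [k2, hr, mul_assoc]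
    have b1 := len_mul_le r δ
    have b2 := len_mul_le p (r * δ)
    rw [← hh] at b2
    have := le_C2 (p := p) (α := α) (β := r * δ) (h1 ▸ h3) (by rw [← hh]; omega)
    rw [← h1, ← hh] at this
    exact le_trans (min_le_left _ _) (h5 ▸ this)
  · obtain ⟨r, hr, hl, ha⟩ := prefix_comparable (k1.symm.trans h2) (k1 ▸ k3) (h2 ▸ h4) hpq
    have hh : g = q * (r * α) := by rw [h1, hr, mul_assoc]
    have b1 := len_mul_le r α
    have b2 := len_mul_le q (r * α)
    rw [← hh] at b2
    have := le_C2 (p := q) (α := r * α) (β := δ) (by rw [← hh]; omega) (k2 ▸ k4)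
    rw [← k2, ← hh] at this
    exact le_trans (min_le_right _ _) (k5 ▸ this)

theorem sq_ne_one {v : F} (hv : v ≠ 1) : v * v ≠ 1 := by
  intro h
  apply hv
  have : v ^ 2 = 1 ^ 2 := by rw [pow_two, h]; simp
  exact pow_left_injective (M := F) (n := 2) (by norm_num) this

/-- An element cancels with itself in less than half of its length. -/
theorem C2_self {v : F} (hv : v ≠ 1) : C2 v⁻¹ v < len v := by
  by_contra hcon
  push Not at hcon
  obtain ⟨p, α, β, h1, h2, h3, h4, h5⟩ := exists_prefix_C2 v⁻¹ v
  have hi := len_inv v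
  have e : α⁻¹ * p⁻¹ = p * β := by rw [← h2, ← mul_inv_rev, ← h1, inv_inv]
  have e1 : len (α⁻¹ * p⁻¹) = len α⁻¹ + len p⁻¹ := by
    rw [e, ← h2, len_inv, len_inv]; omega
  obtain ⟨r, hr, hl, ha⟩ := prefix_comparable e e1 (h2 ▸ h4) (by rw [len_inv]; omega)
  -- `p = α⁻¹ r`, `p⁻¹ = r β`
  have hp2 : p = β⁻¹ * r⁻¹ := by rw [← mul_inv_rev, ← ha, inv_inv]
  have hu := prefix_unique (hr.symm.trans hp2) (by rw [← hr, hl])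
    (by rw [← hp2, hl, len_inv, len_inv, len_inv]; omega) (by rw [len_inv, len_inv]; omega)
  have hab : α = β := inv_injective hu.1
  apply sq_ne_one hv
  have : v⁻¹ = v := by rw [h1, hab, ← h2]
  nth_rw 1 [← this]
  simp

/-! ### Nielsen moves and minimal pairs -/

/-- Pairs obtained from `(x, y)` by Nielsen moves and simultaneous conjugation. -/
inductive NE (x y : F) : F → F → Prop
  | refl : NE x y x y
  | swap {u v : F} : NE x y u v → NE x y v u
  | inv {u v : F} : NE x y u v → NE x y u⁻¹ v
  | mul {u v : F} : NE x y u v → NE x y (u * v) v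
  | conj {u v : F} (g : F) : NE x y u v → NE x y (g * u * g⁻¹) (g * v * g⁻¹)

theorem NE.trans {x y u v s t : F} (h1 : NE x y u v) (h2 : NE u v s t) : NE x y s t := by
  induction h2 with
  | refl => exact h1
  | swap _ ih => exact ih.swap
  | inv _ ih => exact ih.inv
  | mul _ ih => exact ih.mul
  | conj g _ ih => exact ih.conj g

theorem NE.inv' {x y u v : F} (h : NE x y u v) : NE x y u v⁻¹ := h.swap.inv.swap

/-- The pair `(x, y)` generates `F`. -/
def Gen (x y : F) : Prop := ∀ H : Subgroup F, x ∈ H → y ∈ H → H = ⊤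

theorem NE.gen {x y u v : F} (h : NE x y u v) (hg : Gen x y) : Gen u v := by
  induction h with
  | refl => exact hg
  | swap _ ih => exact fun H h1 h2 => ih H h2 h1
  | inv _ ih => exact fun H h1 h2 => ih H (by simpa using h1) h2
  | mul _ ih => exact fun H h1 h2 => ih H ((H.mul_mem_cancel_right h2).1 h1) h2
  | conj g _ ih =>
    intro H h1 h2
    have := ih (H.comap (MulAut.conj g).toMonoidHom) (by simpa using h1) (by simpa using h2)
    rw [eq_top_iff]
    intro w _
    have hw : g⁻¹ * w * g ∈ H.comap (MulAut.conj g).toMonoidHom := by rw [this]; trivial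
    simpa [mul_assoc] using hw

theorem ga_gb_ne : ga * gb ≠ gb * ga := by
  unfold ga gb
  intro h
  have := congrArg FreeGroup.toWord h
  revert this
  decide

theorem Gen.not_comm {x y : F} (hg : Gen x y) : x * y ≠ y * x := by
  intro h
  have h1 := hg (Subgroup.centralizer {x}) (by simp [Subgroup.mem_centralizer_iff])
    (by simp [Subgroup.mem_centralizer_iff, h])
  have h2 := hg (Subgroup.centralizer {y}) (by simp [Subgroup.mem_centralizer_iff, h])
    (by simp [Subgroup.mem_centralizer_iff])
  have h3 : ∀ w, w * x = x * w := fun w => by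
    have : w ∈ Subgroup.centralizer {x} := by rw [h1]; trivial
    exact (Subgroup.mem_centralizer_iff.1 this x rfl).symm
  have h4 : ∀ w, w * y = y * w := fun w => by
    have : w ∈ Subgroup.centralizer {y} := by rw [h2]; trivial
    exact (Subgroup.mem_centralizer_iff.1 this y rfl).symm
  have h5 := hg (Subgroup.centralizer {ga})
    (by simp [Subgroup.mem_centralizer_iff, h3]) (by simp [Subgroup.mem_centralizer_iff, h4])
  have h6 : gb ∈ Subgroup.centralizer {ga} := by rw [h5]; trivial
  exact ga_gb_ne (Subgroup.mem_centralizer_iff.1 h6 ga rfl)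

theorem Gen.ne_one {x y : F} (hg : Gen x y) : x ≠ 1 ∧ y ≠ 1 := by
  constructor <;> rintro rfl <;> exact hg.not_comm (by simp)

/-- The pair `(x, y)` has minimal total length among the equivalent pairs. -/
def NMin (x y : F) : Prop := ∀ u v, NE x y u v → len x + len y ≤ len u + len v

theorem NMin.swap {x y : F} (h : NMin x y) : NMin y x := fun u v huv => by
  have := h u v ((NE.refl.swap).trans huv); omega

theorem NMin.inv {x y : F} (h : NMin x y) : NMin x⁻¹ y := fun u v huv => by
  have := h u v ((NE.refl.inv).trans huv); rw [len_inv]; omega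

theorem NMin.inv' {x y : F} (h : NMin x y) : NMin x y⁻¹ := h.swap.inv.swap

theorem exists_NMin (x y : F) : ∃ u v, NE x y u v ∧ NMin u v := by
  classical
  have hex : ∃ n, ∃ u v, NE x y u v ∧ len u + len v = n := ⟨_, x, y, NE.refl, rfl⟩
  obtain ⟨u, v, huv, hn⟩ := Nat.find_spec hex
  refine ⟨u, v, huv, fun s t hst => ?_⟩
  rw [hn]
  exact Nat.find_min' hex ⟨s, t, huv.trans hst, rfl⟩

theorem NMin.C2_le {x y : F} (h : NMin x y) : C2 x⁻¹ y ≤ len x ∧ C2 x⁻¹ y ≤ len y := by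
  have h1 := h _ _ NE.refl.mul
  have h2 := h _ _ (NE.refl.swap.inv.inv').mul.inv
  simp only [mul_inv_rev, inv_inv, len_inv] at h2
  unfold C2
  rw [len_inv, inv_inv]
  constructor <;> omega

theorem NMin.C2_le' {x y : F} (h : NMin x y) : C2 x y ≤ len x ∧ C2 x y ≤ len y := by
  have := h.inv.C2_le
  rwa [inv_inv, len_inv] at this

theorem half_aux {x p α q γ : F} (h1 : x = p * α) (h3 : len x = len p + len α)
    (k1 : x⁻¹ = q * γ) (k3 : len x⁻¹ = len q + len γ)
    (hp : 2 * len p = len x) (hq : 2 * len q = len x) : α = q⁻¹ := by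
  have e : p * α = γ⁻¹ * q⁻¹ := by rw [← h1, ← mul_inv_rev, ← k1, inv_inv]
  rw [len_inv] at k3
  exact (prefix_unique e (by rw [← h1, h3]) (by rw [← e, ← h1, len_inv, len_inv]; omega)
    (by rw [len_inv]; omega)).2

theorem NMin.half_same {x y : F} (hx : x ≠ 1) (a1 : C2 x y = len x)
    (a2 : C2 x⁻¹ y = len x) : False := by
  obtain ⟨p, α, β, h1, h2, h3, h4, h5⟩ := exists_prefix_C2 x y
  obtain ⟨q, γ, δ, k1, k2, k3, k4, k5⟩ := exists_prefix_C2 x⁻¹ y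
  have hα := half_aux h1 h3 k1 k3 (by omega) (by omega)
  have hpq := (prefix_unique (h2.symm.trans k2) (h2 ▸ h4) (k2 ▸ k4) (by omega)).1
  apply hx
  rw [h1, hα, hpq]; simp

theorem NMin.half_opp {x y : F} (h : NMin x y) (hx : x ≠ 1) (a1 : C2 x y = len x)
    (a2 : C2 x⁻¹ y⁻¹ = len x) : False := by
  obtain ⟨p, α, β, h1, h2, h3, h4, h5⟩ := exists_prefix_C2 x y
  obtain ⟨q, γ, δ, k1, k2, k3, k4, k5⟩ := exists_prefix_C2 x⁻¹ y⁻¹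
  have hα := half_aux h1 h3 k1 k3 (by omega) (by omega)
  have hle := h.C2_le'.2
  have hx0 : len x ≠ 0 := fun h0 => hx (len_eq_zero.1 h0)
  rw [len_inv] at k4
  have e : p * β = δ⁻¹ * q⁻¹ := by rw [← h2, ← mul_inv_rev, ← k2, inv_inv]
  obtain ⟨m, hm, hl, hb⟩ := prefix_comparable e (h2 ▸ h4)
    (by rw [← e, ← h2, len_inv, len_inv]; omega) (by rw [len_inv]; omega)
  rw [len_inv] at hl
  have hy : y = p * m * q⁻¹ := by rw [h2, hb, mul_assoc]
  -- the pair `(x, y)` is equivalent to `(m, q⁻¹ p)`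
  have key := h _ _ ((NE.refl.swap.inv.mul.inv).conj q⁻¹)
  have e1 : q⁻¹ * (y⁻¹ * x)⁻¹ * q⁻¹⁻¹ = m := by
    rw [hy, h1, hα]; group
  have e2 : q⁻¹ * x * q⁻¹⁻¹ = q⁻¹ * p := by
    rw [h1, hα]; group
  rw [e1, e2] at key
  have := len_mul_le q⁻¹ p
  rw [len_inv] at this
  omega

/-! ### Words in a minimal pair -/

/-- The value of a letter. -/
def val (z : Fin 2 → F) (l : Fin 2 × Bool) : F := cond l.2 (z l.1) (z l.1)⁻¹

/-- The letters `u`, `v` do not cancel. -/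
def RR (u v : Fin 2 × Bool) : Prop := u.1 = v.1 → u.2 = v.2

theorem NMin.val {z : Fin 2 → F} (h : NMin (z 0) (z 1)) (u v : Fin 2 × Bool) (huv : u.1 ≠ v.1) :
    NMin (val z u) (val z v) := by
  rcases u with ⟨i, b⟩
  rcases v with ⟨j, c⟩
  have key : NMin (z i) (z j) := by
    fin_cases i <;> fin_cases j
    · exact absurd rfl huv
    · exact h
    · exact h.swap
    · exact absurd rfl huv
  cases b <;> cases c
  · exact key.inv.inv'
  · exact key.inv
  · exact key.inv'
  · exact key

section words

variable {z : Fin 2 → F}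

theorem val_ne_one (h0 : ∀ i, z i ≠ 1) (u : Fin 2 × Bool) : val z u ≠ 1 := by
  rcases u with ⟨i, b⟩
  cases b <;> simp [_root_.val, h0]

theorem RR.eq_or {u v : Fin 2 × Bool} (hr : RR u v) : u = v ∨ u.1 ≠ v.1 := by
  by_cases h1 : u.1 = v.1
  · exact Or.inl (Prod.ext h1 (hr h1))
  · exact Or.inr h1

theorem N1 (h : NMin (z 0) (z 1)) (h0 : ∀ i, z i ≠ 1) {u v : Fin 2 × Bool} (hr : RR u v) :
    C2 (val z u)⁻¹ (val z v) ≤ len (val z u) ∧ C2 (val z u)⁻¹ (val z v) ≤ len (val z v) := by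
  rcases hr.eq_or with rfl | hne
  · have := C2_self (val_ne_one h0 u)
    exact ⟨this.le, this.le⟩
  · exact (h.val u v hne).C2_le

theorem N2 (h : NMin (z 0) (z 1)) (h0 : ∀ i, z i ≠ 1) {u v w : Fin 2 × Bool} (hr : RR u v)
    (hs : RR v w) :
    C2 (val z u)⁻¹ (val z v) + C2 (val z v)⁻¹ (val z w) < 2 * len (val z v) := by
  have a1 := (N1 h h0 hr).2
  have a2 := (N1 h h0 hs).1
  rcases hr.eq_or with rfl | hne
  · have := C2_self (val_ne_one h0 u)
    omega
  rcases hs.eq_or with rfl | hne'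
  · have := C2_self (val_ne_one h0 v)
    omega
  by_contra hcon
  have b1 : C2 (val z v) (val z u)⁻¹ = len (val z v) := by rw [C2_comm]; omega
  have b2 : C2 (val z v)⁻¹ (val z w) = len (val z v) := by omega
  have huw : u.1 = w.1 := by
    rcases u with ⟨i, _⟩
    rcases v with ⟨j, _⟩
    rcases w with ⟨k, _⟩
    simp only at hne hne' ⊢
    omega
  by_cases hb : u.2 = w.2
  · have : w = u := Prod.ext huw.symm hb.symm
    subst this
    exact (h.val v w hne.symm).inv'.half_opp (val_ne_one h0 v) b1 (by rw [inv_inv]; exact b2)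
  · have : val z w = (val z u)⁻¹ := by
      rcases u with ⟨i, b⟩
      rcases w with ⟨k, c⟩
      simp only at huw hb
      subst huw
      cases b <;> cases c <;> simp_all [_root_.val]
    rw [this] at b2
    exact NMin.half_same (val_ne_one h0 v) b1 b2

theorem growth (h : NMin (z 0) (z 1)) (h0 : ∀ i, z i ≠ 1) (L : List (Fin 2 × Bool))
    (l : Fin 2 × Bool) (hL : FreeGroup.IsReduced (l :: L)) :
    (∀ u, RR u l → C2 (val z u)⁻¹ (val z l) < C2 (((l :: L).map (val z)).prod) (val z l)) ∧
    ∀ m ∈ l :: L, len (val z m) ≤ len (((l :: L).map (val z)).prod) := by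
  induction L generalizing l with
  | nil =>
    refine ⟨fun u hu => ?_, by simp⟩
    have a := (N1 h h0 hu).2
    have b : len (val z l) ≠ 0 := fun hh => val_ne_one h0 l (len_eq_zero.1 hh)
    have c : C2 (val z l) (val z l) = 2 * len (val z l) := by
      have : len (1 : F) = 0 := len_eq_zero.2 rfl
      simp [C2, this]; ring
    simp only [List.map_cons, List.map_nil, List.prod_cons, List.prod_nil, mul_one]
    omega
  | cons w L ih =>
    have hL' : FreeGroup.IsReduced (w :: L) := List.IsChain.tail hL
    have hlw : RR l w := (List.isChain_cons_cons.1 hL).1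
    obtain ⟨i1, i2⟩ := ih w hL'
    rw [List.map_cons, List.prod_cons]
    set g := ((w :: L).map (val z)).prod with hg
    have j1 := i1 l hlw
    have j2 := i2 w (by simp)
    have n1 := N1 h h0 hlw
    have u1 := C2_ultra (val z l)⁻¹ g (val z w)
    have u2 := C2_ultra (val z l)⁻¹ (val z w) g
    rw [C2_comm (val z w) g] at u2
    have e : C2 (val z l)⁻¹ g = C2 (val z l)⁻¹ (val z w) := by omega
    have e2 : (len (val z l * g) : ℤ) = len (val z l) + len g - C2 (val z l)⁻¹ (val z w) := by
      rw [← e]; unfold C2; rw [inv_inv, len_inv]; ring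
    have e3 : C2 (val z l * g) (val z l) = 2 * len (val z l) - C2 (val z l)⁻¹ (val z w) := by
      unfold C2
      have : (val z l * g)⁻¹ * val z l = g⁻¹ := by group
      rw [this, len_inv, e2]
      unfold C2
      ring
    refine ⟨fun u hu => ?_, ?_⟩
    · have := N2 h h0 hu hlw
      rw [e3]; omega
    · intro m hm
      rcases List.mem_cons.1 hm with rfl | hm
      · omega
      · have := i2 m hm
        omega

theorem word_mem (h : NMin (z 0) (z 1)) (h0 : ∀ i, z i ≠ 1) (w : F) (m : Fin 2 × Bool)
    (hm : m ∈ w.toWord) : len (val z m) ≤ len (FreeGroup.lift z w) := by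
  have e : FreeGroup.lift z w = (w.toWord.map (val z)).prod := by
    conv_lhs => rw [← FreeGroup.mk_toWord (x := w)]
    rw [FreeGroup.lift_mk]; rfl
  rw [e]
  have hr : FreeGroup.IsReduced w.toWord := FreeGroup.isReduced_toWord
  cases hw : w.toWord with
  | nil => rw [hw] at hm; simp at hm
  | cons l L =>
    rw [hw] at hm hr
    exact (growth h h0 L l hr).2 m hm

end words

theorem len_ga : len ga = 1 := rfl

theorem len_gb : len gb = 1 := rfl

/-- A minimal generating pair consists of elements of length one. -/
theorem NMin.len_le_one {x y : F} (h : NMin x y) (hg : Gen x y) : len x ≤ 1 := by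
  by_contra hcon
  push Not at hcon
  let z : Fin 2 → F := ![x, y]
  have h0 : ∀ i, z i ≠ 1 := by
    intro i
    fin_cases i
    · exact hg.ne_one.1
    · exact hg.ne_one.2
  have hz : NMin (z 0) (z 1) := h
  have hsurj : (FreeGroup.lift z).range = ⊤ :=
    hg _ ⟨FreeGroup.of 0, by simp [z]⟩ ⟨FreeGroup.of 1, by simp [z]⟩
  have key : ∀ s : F, len s = 1 → s ∈ Subgroup.zpowers y := by
    intro s hs
    have : s ∈ (FreeGroup.lift z).range := by rw [hsurj]; trivial
    obtain ⟨w, rfl⟩ := this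
    have e : FreeGroup.lift z w = (w.toWord.map (_root_.val z)).prod := by
      conv_lhs => rw [← FreeGroup.mk_toWord (x := w)]
      rw [FreeGroup.lift_mk]; rfl
    rw [e]
    apply Subgroup.list_prod_mem
    intro t ht
    obtain ⟨m, hm, rfl⟩ := List.mem_map.1 ht
    have hle := word_mem hz h0 w m hm
    rw [hs] at hle
    rcases m with ⟨i, b⟩
    fin_cases i
    · exfalso
      cases b <;> simp [_root_.val, z, len_inv] at hle <;> omega
    · cases b <;> simp [_root_.val, z]
  obtain ⟨i, hi⟩ := key ga len_ga
  obtain ⟨j, hj⟩ := key gb len_gb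
  apply ga_gb_ne
  rw [← hi, ← hj]
  exact (zpow_mul_comm y i j)

theorem len_one_cases {x : F} (h1 : len x ≤ 1) (hx : x ≠ 1) :
    (x = ga ∨ x = ga⁻¹) ∨ (x = gb ∨ x = gb⁻¹) := by
  have h0 : len x ≠ 0 := fun hh => hx (len_eq_zero.1 hh)
  have h2 : x.toWord.length = 1 := by unfold len at *; omega
  obtain ⟨⟨i, b⟩, hl⟩ := List.length_eq_one_iff.1 h2
  have hx : x = FreeGroup.mk [(i, b)] := by rw [← hl, FreeGroup.mk_toWord]
  subst hx
  fin_cases i <;> cases b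
  · exact Or.inl (Or.inr rfl)
  · exact Or.inl (Or.inl rfl)
  · exact Or.inr (Or.inr rfl)
  · exact Or.inr (Or.inl rfl)

/-! ### Positive pairs -/

/-- Pairs obtained from `(s, t)` by swaps and positive Nielsen moves. -/
inductive PP (s t : F) : F → F → Prop
  | base : PP s t s t
  | swap {p q : F} : PP s t p q → PP s t q p
  | mul {p q : F} : PP s t p q → PP s t (p * q) q

/-- `s = a^{±1}` and `t = b^{±1}`. -/
def Base (s t : F) : Prop := (s = ga ∨ s = ga⁻¹) ∧ (t = gb ∨ t = gb⁻¹)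

theorem Base.inv {s t : F} (h : Base s t) : Base s⁻¹ t := by
  rcases h with ⟨rfl | rfl, h⟩
  · exact ⟨Or.inr rfl, h⟩
  · exact ⟨Or.inl (inv_inv _), h⟩

theorem Base.inv' {s t : F} (h : Base s t) : Base s t⁻¹ := by
  rcases h with ⟨h, rfl | rfl⟩
  · exact ⟨h, Or.inr rfl⟩
  · exact ⟨h, Or.inl (inv_inv _)⟩

/-- Pairs which are positive up to conjugation and signs. -/
def Good (x y : F) : Prop := ∃ s t p q g : F, Base s t ∧ PP s t p q ∧
  (x = g * p * g⁻¹ ∨ x = g * p⁻¹ * g⁻¹) ∧ (y = g * q * g⁻¹ ∨ y = g * q⁻¹ * g⁻¹)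

theorem Good.swap {x y : F} : Good x y → Good y x := by
  rintro ⟨s, t, p, q, g, hb, hp, hx, hy⟩
  exact ⟨s, t, q, p, g, hb, hp.swap, hy, hx⟩

theorem Good.inv {x y : F} : Good x y → Good x⁻¹ y := by
  rintro ⟨s, t, p, q, g, hb, hp, hx, hy⟩
  refine ⟨s, t, p, q, g, hb, hp, ?_, hy⟩
  rcases hx with rfl | rfl
  · right; group
  · left; group

theorem Good.inv' {x y : F} (h : Good x y) : Good x y⁻¹ := h.swap.inv.swap

theorem Good.conj {x y : F} (k : F) : Good x y → Good (k * x * k⁻¹) (k * y * k⁻¹) := by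
  rintro ⟨s, t, p, q, g, hb, hp, hx, hy⟩
  refine ⟨s, t, p, q, k * g, hb, hp, ?_, ?_⟩
  · rcases hx with rfl | rfl
    · left; group
    · right; group
  · rcases hy with rfl | rfl
    · left; group
    · right; group

theorem Good.of_conj {x y : F} (k : F) (h : Good (k * x * k⁻¹) (k * y * k⁻¹)) : Good x y := by
  have := h.conj k⁻¹
  have e : ∀ w : F, k⁻¹ * (k * w * k⁻¹) * k⁻¹⁻¹ = w := fun w => by group
  rwa [e, e] at this

theorem PP.good {s t p q : F} (hb : Base s t) (h : PP s t p q) : Good p q :=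
  ⟨s, t, p, q, 1, hb, h, Or.inl (by simp), Or.inl (by simp)⟩

/-- Undoing a positive Nielsen move. -/
theorem PP.undo {s t p q : F} (hb : Base s t) (h : PP s t p q) :
    Good (p * q⁻¹) q ∧ Good (q * p⁻¹) p := by
  induction h with
  | base =>
    constructor
    · have := (PP.good hb.inv' PP.base.mul).inv'
      rwa [inv_inv] at this
    · have := (PP.good hb.inv PP.base.swap.mul).inv'
      rwa [inv_inv] at this
  | swap _ ih => exact ih.symm
  | @mul p q h ih =>
    constructor
    · simpa using h.good hb
    · have h1 : Good p (q * p) := (h.swap.mul.swap).good hb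
      have h2 := (h1.conj p).inv
      have e1 : (p * p * p⁻¹)⁻¹ = q * (p * q)⁻¹ := by group
      have e2 : p * (q * p) * p⁻¹ = p * q := by group
      rwa [e1, e2] at h2

theorem Good.mul {x y : F} : Good x y → Good (x * y) y := by
  rintro ⟨s, t, p, q, g, hb, hp, hx, hy⟩
  have hu := (hp.undo hb).1
  have hm := (hp.mul).good hb
  rcases hx with rfl | rfl <;> rcases hy with rfl | rfl
  · have := hm.conj g
    convert this using 1
    group
  · have := hu.inv'.conj g
    convert this using 1
    group
  · have := hu.inv.conj q⁻¹
    have := this.conj g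
    -- `(q p⁻¹, q)` conjugated by `q⁻¹` is `(p⁻¹ q, q)`
    convert this using 1 <;> group
  · have := (hm.inv.inv'.conj q).conj g
    convert this using 1 <;> group

theorem Good.of_mul {x y : F} (h : Good (x * y) y) : Good x y := by
  have := h.inv'.mul.inv'
  simpa using this

theorem NE.good {x y u v : F} (h : NE x y u v) (hg : Good u v) : Good x y := by
  induction h with
  | refl => exact hg
  | swap _ ih => exact ih hg.swap
  | inv _ ih => exact ih (by simpa using hg.inv)
  | mul _ ih => exact ih hg.of_mul
  | conj g _ ih => exact ih (hg.of_conj g)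

/-- Every generating pair is positive up to conjugation and signs. -/
theorem Gen.good {x y : F} (hg : Gen x y) : Good x y := by
  obtain ⟨u, v, huv, hmin⟩ := exists_NMin x y
  refine huv.good ?_
  have hg' := huv.gen hg
  have hsw : Gen v u := fun H h1 h2 => hg' H h2 h1
  have hc := hg'.not_comm
  have h1 := len_one_cases (hmin.len_le_one hg') hg'.ne_one.1
  have h2 := len_one_cases (hmin.swap.len_le_one hsw) hg'.ne_one.2
  rcases h1 with h1 | h1 <;> rcases h2 with h2 | h2
  · exfalso
    rcases h1 with rfl | rfl <;> rcases h2 with rfl | rfl <;> simp at hc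
  · exact PP.good ⟨h1, h2⟩ PP.base
  · exact (PP.good ⟨h2, h1⟩ PP.base).swap
  · exfalso
    rcases h1 with rfl | rfl <;> rcases h2 with rfl | rfl <;> simp at hc

/-! ### Cyclic length -/

theorem cyclen_le (w g : F) : cyclen w ≤ len (g * w * g⁻¹) := Nat.sInf_le ⟨g, rfl⟩

theorem le_cyclen (w : F) (n : ℕ) (h : ∀ g, n ≤ len (g * w * g⁻¹)) : n ≤ cyclen w := by
  have hne : {n | ∃ g : F, len (g * w * g⁻¹) = n}.Nonempty := ⟨_, 1, rfl⟩
  obtain ⟨g, hg⟩ := Nat.sInf_mem hne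
  unfold cyclen
  rw [← hg]
  exact h g

/-- A weighted exponent sum. -/
def expo (c : Fin 2 → ℤ) : F →* Multiplicative ℤ :=
  FreeGroup.lift fun i => Multiplicative.ofAdd (c i)

/-- The weighted exponent sum as an integer. -/
def ex (c : Fin 2 → ℤ) (w : F) : ℤ := Multiplicative.toAdd (expo c w)

theorem ex_mul (c : Fin 2 → ℤ) (v w : F) : ex c (v * w) = ex c v + ex c w := by simp [ex]

theorem ex_inv (c : Fin 2 → ℤ) (v : F) : ex c v⁻¹ = - ex c v := by simp [ex]

theorem ex_ga (c : Fin 2 → ℤ) : ex c ga = c 0 := by simp [ex, expo, ga]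

theorem ex_gb (c : Fin 2 → ℤ) : ex c gb = c 1 := by simp [ex, expo, gb]

theorem abs_ex_le (c : Fin 2 → ℤ) (hc : ∀ i, |c i| ≤ 1) (w : F) : |ex c w| ≤ len w := by
  have key : ∀ L : List (Fin 2 × Bool), |ex c (FreeGroup.mk L)| ≤ L.length := by
    intro L
    induction L with
    | nil =>
      have : (FreeGroup.mk [] : F) = 1 := rfl
      rw [this]; simp [ex]
    | cons l L ih =>
      have e : (FreeGroup.mk (l :: L) : F) = FreeGroup.mk [l] * FreeGroup.mk L := by
        rw [FreeGroup.mul_mk]; rfl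
      have hl : |ex c (FreeGroup.mk [l])| ≤ 1 := by
        rcases l with ⟨i, b⟩
        cases b <;> simp [ex, expo, hc i]
      rw [e, ex_mul, List.length_cons]
      have := abs_add_le (ex c (FreeGroup.mk [l])) (ex c (FreeGroup.mk L))
      push_cast
      linarith
  have := key w.toWord
  rwa [FreeGroup.mk_toWord] at this

theorem abs_ex_le_cyclen (c : Fin 2 → ℤ) (hc : ∀ i, |c i| ≤ 1) (w : F) :
    |ex c w| ≤ cyclen w := by
  have : (ex c w).natAbs ≤ cyclen w := by
    apply le_cyclen
    intro g
    have := abs_ex_le c hc (g * w * g⁻¹)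
    rw [ex_mul, ex_mul, ex_inv] at this
    have e : ex c g + ex c w + -ex c g = ex c w := by ring
    rw [e, Int.abs_eq_natAbs] at this
    exact_mod_cast this
  rw [Int.abs_eq_natAbs]
  exact_mod_cast this

/-- The property from which the estimates follow. -/
def TT (x y : F) : Prop := ∃ c : Fin 2 → ℤ, (∀ i, |c i| ≤ 1) ∧ ∃ (g u r : F) (k l : ℤ),
  x = g * u * g⁻¹ ∧ (len u : ℤ) ≤ |ex c u| ∧ y = g * (u ^ k * r * u ^ l) * g⁻¹ ∧ len r ≤ len u

theorem TT.inv {x y : F} : TT x y → TT x⁻¹ y := by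
  rintro ⟨c, hc, g, u, r, k, l, rfl, h2, rfl, h4⟩
  refine ⟨c, hc, g, u⁻¹, r, -k, -l, by group, ?_, by group, by rwa [len_inv]⟩
  rwa [len_inv, ex_inv, abs_neg]

theorem TT.inv' {x y : F} : TT x y → TT x y⁻¹ := by
  rintro ⟨c, hc, g, u, r, k, l, rfl, h2, rfl, h4⟩
  exact ⟨c, hc, g, u, r⁻¹, -l, -k, by group, h2, by group, by rwa [len_inv]⟩

theorem TT.conj {x y : F} (m : F) : TT x y → TT (m * x * m⁻¹) (m * y * m⁻¹) := by
  rintro ⟨c, hc, g, u, r, k, l, rfl, h2, rfl, h4⟩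
  exact ⟨c, hc, m * g, u, r, k, l, by group, h2, by group, h4⟩

theorem PP.inv_aux {s t p q : F} (c : Fin 2 → ℤ) (hc : ∀ i, |c i| ≤ 1) (hs : ex c s = 1)
    (ht : ex c t = 1) (ls : len s = 1) (lt : len t = 1) (h : PP s t p q) :
    ((len p : ℤ) ≤ ex c p ∧ (len q : ℤ) ≤ ex c q) ∧
    (∃ k : ℤ, len (q * p ^ k) ≤ len p) ∧ ∃ k : ℤ, len (p * q ^ k) ≤ len q := by
  induction h with
  | base =>
    refine ⟨by omega, ⟨0, ?_⟩, 0, ?_⟩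
    · simp [ls, lt]
    · simp [ls, lt]
  | swap _ ih => exact ⟨ih.1.symm, ih.2.symm⟩
  | @mul p q h ih =>
    obtain ⟨⟨h1, h2⟩, -, k, hk⟩ := ih
    have a := len_mul_le p q
    have b := ex_mul c p q
    have d := (le_abs_self _).trans (abs_ex_le c hc (p * q))
    refine ⟨⟨by omega, h2⟩, ⟨0, ?_⟩, k - 1, ?_⟩
    · simp only [zpow_zero, mul_one]
      have := (le_abs_self _).trans (abs_ex_le c hc q)
      omega
    · have e : p * q * q ^ (k - 1) = p * q ^ k := by group
      rwa [e]

theorem PP.TT {s t p q : F} (hb : Base s t) (h : PP s t p q) : TT p q := by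
  have ls : len s = 1 := by
    rcases hb.1 with rfl | rfl
    · rfl
    · rw [len_inv]; rfl
  have lt : len t = 1 := by
    rcases hb.2 with rfl | rfl
    · rfl
    · rw [len_inv]; rfl
  have hcex : ∃ c : Fin 2 → ℤ, (∀ i, |c i| ≤ 1) ∧ ex c s = 1 ∧ ex c t = 1 := by
    have h1 : ∃ m : ℤ, |m| ≤ 1 ∧ ∀ c : Fin 2 → ℤ, c 0 = m → ex c s = 1 := by
      rcases hb.1 with rfl | rfl
      · exact ⟨1, by simp, fun c hc => by rw [ex_ga, hc]⟩
      · exact ⟨-1, by simp, fun c hc => by rw [ex_inv, ex_ga, hc]; rfl⟩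
    have h2 : ∃ m : ℤ, |m| ≤ 1 ∧ ∀ c : Fin 2 → ℤ, c 1 = m → ex c t = 1 := by
      rcases hb.2 with rfl | rfl
      · exact ⟨1, by simp, fun c hc => by rw [ex_gb, hc]⟩
      · exact ⟨-1, by simp, fun c hc => by rw [ex_inv, ex_gb, hc]; rfl⟩
    obtain ⟨m, hm, h1⟩ := h1
    obtain ⟨n, hn, h2⟩ := h2
    refine ⟨![m, n], ?_, h1 _ rfl, h2 _ rfl⟩
    intro i
    fin_cases i
    · exact hm
    · exact hn
  obtain ⟨c, hc, hs, ht⟩ := hcex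
  obtain ⟨⟨h1, h2⟩, ⟨k, hk⟩, -⟩ := h.inv_aux c hc hs ht ls lt
  exact ⟨c, hc, 1, p, q * p ^ k, 0, -k, by simp, h1.trans (le_abs_self _), by group, hk⟩

theorem Good.TT {x y : F} : Good x y → TT x y := by
  rintro ⟨s, t, p, q, g, hb, hp, hx, hy⟩
  have h := PP.TT hb hp
  rcases hx with rfl | rfl <;> rcases hy with rfl | rfl
  · exact h.conj g
  · exact h.inv'.conj g
  · exact h.inv.conj g
  · exact h.inv.inv'.conj g

theorem TT.bounds {x y : F} : TT x y →
    cyclen x ≤ cyclen (x * (x * y * x⁻¹ * y⁻¹)) ∧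
    cyclen (x * (x * y * x⁻¹ * y⁻¹)) ≤ 5 * cyclen x := by
  rintro ⟨c, hc, g, u, r, k, l, hx, h2, hy, h4⟩
  have ex1 : ex c x = ex c u := by rw [hx, ex_mul, ex_mul, ex_inv]; ring
  have b1 : cyclen x ≤ len u := by
    have := cyclen_le x g⁻¹
    have e : g⁻¹ * x * g⁻¹⁻¹ = u := by rw [hx]; group
    rwa [e] at this
  have b2 := abs_ex_le_cyclen c hc x
  have b3 := abs_ex_le_cyclen c hc (x * (x * y * x⁻¹ * y⁻¹))
  have ex2 : ex c (x * (x * y * x⁻¹ * y⁻¹)) = ex c u := by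
    simp only [ex_mul, ex_inv, ex1]; ring
  rw [ex1] at b2
  rw [ex2] at b3
  refine ⟨by omega, ?_⟩
  have b4 := cyclen_le (x * (x * y * x⁻¹ * y⁻¹)) (u ^ (-k) * g⁻¹)
  have e : (u ^ (-k) * g⁻¹) * (x * (x * y * x⁻¹ * y⁻¹)) * (u ^ (-k) * g⁻¹)⁻¹
      = u * (u * (r * (u⁻¹ * r⁻¹))) := by
    rw [hx, hy]; group; rw [zpow_two]
  rw [e] at b4
  have c1 := len_mul_le u (u * (r * (u⁻¹ * r⁻¹)))
  have c2 := len_mul_le u (r * (u⁻¹ * r⁻¹))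
  have c3 := len_mul_le r (u⁻¹ * r⁻¹)
  have c4 := len_mul_le u⁻¹ r⁻¹
  rw [len_inv, len_inv] at c4
  omega

theorem gen_aut (φ : MulAut F) : Gen (φ ga) (φ gb) := by
  intro H h1 h2
  have h3 : ∀ w : F, φ w ∈ H := by
    intro w
    induction w using FreeGroup.induction_on with
    | C1 => simp
    | of i =>
      fin_cases i
      · exact h1
      · exact h2
    | inv_of i hi => rw [map_inv]; exact H.inv_mem hi
    | mul x y hx hy => rw [map_mul]; exact H.mul_mem hx hy
  rw [eq_top_iff]
  intro w _
  have := h3 (φ.symm w)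
  rwa [MulEquiv.apply_symm_apply] at this

/-- `‖φ(a)‖ ≤ ‖φ(a[a,b])‖ ≤ 5‖φ(a)‖` for every automorphism `φ`; in particular `a` and
`a[a,b]` are boundedly translation equivalent. -/
theorem stmt2 :
    (∀ φ : MulAut F,
      cyclen (φ ga) ≤ cyclen (φ (ga * (ga * gb * ga⁻¹ * gb⁻¹))) ∧
      cyclen (φ (ga * (ga * gb * ga⁻¹ * gb⁻¹))) ≤ 5 * cyclen (φ ga)) ∧
    ∃ C : ℝ, 0 < C ∧ ∀ φ : MulAut F,
      (cyclen (φ ga) : ℝ) ≤ C * cyclen (φ (ga * (ga * gb * ga⁻¹ * gb⁻¹))) ∧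
      (cyclen (φ (ga * (ga * gb * ga⁻¹ * gb⁻¹))) : ℝ) ≤ C * cyclen (φ ga) := by

  have key : ∀ φ : MulAut F,
      cyclen (φ ga) ≤ cyclen (φ (ga * (ga * gb * ga⁻¹ * gb⁻¹))) ∧
      cyclen (φ (ga * (ga * gb * ga⁻¹ * gb⁻¹))) ≤ 5 * cyclen (φ ga) := by
    intro φ
    have := (gen_aut φ).good.TT.bounds
    simpa only [map_mul, map_inv] using this
  refine ⟨key, 5, by norm_num, fun φ => ?_⟩
  obtain ⟨h1, h2⟩ := key φ
  have h1' : (cyclen (φ ga) : ℝ) ≤ cyclen (φ (ga * (ga * gb * ga⁻¹ * gb⁻¹))) := by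
    exact_mod_cast h1
  have h0 : (0 : ℝ) ≤ cyclen (φ ga) := Nat.cast_nonneg _
  refine ⟨by linarith, by exact_mod_cast h2⟩
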